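/- The additive homomorphism ⊕_{(i,j)∈ℕ×ℕ} ℤ/p → Y ⊗_R Y sending the generator of the (i,j)-th summand to b_i ⊗ b_j is an isomorphism of abelian groups; in particular, the elements b_i ⊗ b_j form an 𝔽_p-basis of Y ⊗_R Y. (This is the linear independence of the elements v_{2i−1} ⊗ v_{2j−1} asserted in Example 2.9.) -/

import Mathlib

/-!
Write `φ : R → 𝔽_p` for reduction modulo `p` followed by evaluation at `v = 0`; its kernel is
`(p, v)`.

The ideal `(p, v)` kills each `b_i ⊗ b_j` (`bY_tmul_bY_killed`). This is an induction on `i`: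
`p (b_i ⊗ b_j)` is `0` for `i = 0` and is `v (b_{i-1} ⊗ b_j)` otherwise, while
`v (b_i ⊗ b_j) = p (b_i ⊗ b_{j+1})`. Hence `R` acts on `b_i ⊗ b_j` through `φ`, so the map from
the direct sum is well defined and surjective.

For injectivity, all the relations defining `Y` have coefficients in `(p, v)`, so the coordinates
modulo `(p, v)` give an `R`-linear map `Y → ⊕_ℕ 𝔽_p` (`coord`). The product of the coordinates of
the two tensor factors is a map `Y ⊗ Y → ⊕_{ℕ × ℕ} 𝔽_p` (`coordTensor`) that sends `b_i ⊗ b_j` to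
the `(i, j)`-th basis vector.
-/

noncomputable section

/-- `R = ℤ_p[v]`, the polynomial ring over the `p`-adic integers. -/
abbrev R (p : ℕ) [Fact p.Prime] : Type := Polynomial (PadicInt p)

/-- `F = ⊕_{j ∈ ℕ} R·b_j`, the free `R`-module on generators `b_j = single j 1`. -/
abbrev F (p : ℕ) [Fact p.Prime] : Type := ℕ →₀ R p

/-- The relations `p·b_0` and `p·b_j - v·b_{j-1}` for `j ≥ 1`. -/
def rel (p : ℕ) [Fact p.Prime] : ℕ → F p
  | 0 => Finsupp.single 0 (p : R p)
  | (j + 1) => Finsupp.single (j + 1) (p : R p) - Finsupp.single j (Polynomial.X : R p)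

/-- `Y`, the quotient of `F` by the submodule generated by the relations. -/
abbrev Y (p : ℕ) [Fact p.Prime] : Type :=
  F p ⧸ Submodule.span (R p) (Set.range (rel p))

/-- The image of the generator `b_j` in `Y`. -/
def bY (p : ℕ) [Fact p.Prime] (j : ℕ) : Y p :=
  Submodule.Quotient.mk (Finsupp.single j (1 : R p))

open TensorProduct DirectSum

/-- The ring homomorphism `φ : ℤ_p[v] → 𝔽_p` with `v ↦ 0`, whose kernel is `(p, v)`. -/
def residue (p : ℕ) [Fact p.Prime] : R p →+* ZMod p :=
  PadicInt.toZMod.comp Polynomial.constantCoeff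

/-- `𝔽_p` as an `R`-algebra through `residue`. -/
instance residueAlgebra (p : ℕ) [Fact p.Prime] : Algebra (R p) (ZMod p) :=
  (residue p).toAlgebra

lemma p_smul_bY_zero (p : ℕ) [Fact p.Prime] : (p : R p) • bY p 0 = 0 := by
  rw [bY, ← Submodule.Quotient.mk_smul, Submodule.Quotient.mk_eq_zero]
  exact Submodule.subset_span ⟨0, by simp [rel]⟩

lemma p_smul_bY_succ (p : ℕ) [Fact p.Prime] (j : ℕ) :
    (p : R p) • bY p (j + 1) = (Polynomial.X : R p) • bY p j := by
  rw [bY, bY, ← Submodule.Quotient.mk_smul, ← Submodule.Quotient.mk_smul,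
    Submodule.Quotient.eq]
  exact Submodule.subset_span ⟨j + 1, by simp [rel]⟩

/-- Both `p` and `v` annihilate `b_i ⊗ b_j`: in the induction on `i`, a factor `p` is moved
down the left tensor factor, and a factor `v` is traded for `p` by raising the index on the
right. -/
lemma bY_tmul_bY_killed (p : ℕ) [Fact p.Prime] (i j : ℕ) :
    (p : R p) • (bY p i ⊗ₜ[R p] bY p j) = 0 ∧
      (Polynomial.X : R p) • (bY p i ⊗ₜ[R p] bY p j) = 0 := by
  have key : ∀ i, (∀ j, (p : R p) • (bY p i ⊗ₜ[R p] bY p j) = 0) →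
      ∀ j, (Polynomial.X : R p) • (bY p i ⊗ₜ[R p] bY p j) = 0 := by
    intro i h j
    rw [← TensorProduct.tmul_smul, ← p_smul_bY_succ, TensorProduct.tmul_smul]
    exact h (j + 1)
  have hp : ∀ i j, (p : R p) • (bY p i ⊗ₜ[R p] bY p j) = 0 := by
    intro i
    induction i with
    | zero =>
      intro j
      rw [TensorProduct.smul_tmul', p_smul_bY_zero, TensorProduct.zero_tmul]
    | succ i ih =>
      intro j
      rw [TensorProduct.smul_tmul', p_smul_bY_succ, ← TensorProduct.smul_tmul']
      exact key i ih j
  exact ⟨hp i j, key i (hp i) j⟩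

lemma exists_of_residue_eq_zero (p : ℕ) [Fact p.Prime] (r : R p) (h : residue p r = 0) :
    ∃ q a : R p, r = q * Polynomial.X + a * (p : R p) := by
  have h1 : r.coeff 0 ∈ RingHom.ker (PadicInt.toZMod (p := p)) := h
  rw [PadicInt.ker_toZMod, PadicInt.maximalIdeal_eq_span_p, Ideal.mem_span_singleton'] at h1
  obtain ⟨a, ha⟩ := h1
  refine ⟨r.divX, Polynomial.C a, ?_⟩
  conv_lhs => rw [← Polynomial.divX_mul_X_add r, ← ha]
  simp

/-- `R` acts on `b_i ⊗ b_j` through `residue`, here with the representative of the residue in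
`{0, …, p - 1}`. -/
lemma smul_bY_tmul_bY (p : ℕ) [Fact p.Prime] (r : R p) (i j : ℕ) :
    r • (bY p i ⊗ₜ[R p] bY p j) = (residue p r).val • (bY p i ⊗ₜ[R p] bY p j) := by
  obtain ⟨q, a, h⟩ := exists_of_residue_eq_zero p (r - ((residue p r).val : R p)) (by simp)
  obtain ⟨h1, h2⟩ := bY_tmul_bY_killed p i j
  rw [sub_eq_iff_eq_add] at h
  rw [← Nat.cast_smul_eq_nsmul (R p)]
  conv_lhs => rw [h]
  rw [add_smul, add_smul, mul_smul, mul_smul, h1, h2, smul_zero, smul_zero, add_zero, zero_add]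

/-- The coordinates modulo `(p, v)`, as the `R`-linear map `Y → ⊕_ℕ 𝔽_p` with `b_j ↦ e_j`. -/
def coord (p : ℕ) [Fact p.Prime] : Y p →ₗ[R p] (ℕ →₀ ZMod p) :=
  Submodule.liftQ _ (Finsupp.mapRange.linearMap (Algebra.linearMap (R p) (ZMod p))) (by
    rw [Submodule.span_le]
    rintro _ ⟨j, rfl⟩
    have hX : algebraMap (R p) (ZMod p) Polynomial.X = 0 := by
      change residue p Polynomial.X = 0
      simp [residue]
    cases j with
    | zero => simp [rel]
    | succ j =>
      rw [SetLike.mem_coe, LinearMap.mem_ker, rel, map_sub]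
      simp [hX])

lemma coord_bY (p : ℕ) [Fact p.Prime] (j : ℕ) : coord p (bY p j) = Finsupp.single j 1 := by
  simp [coord, bY]

/-- The product of the coordinates modulo `(p, v)` of the two factors, as an `R`-linear map
`Y ⊗ Y → ⊕_{ℕ × ℕ} 𝔽_p`. -/
def coordTensor (p : ℕ) [Fact p.Prime] : Y p ⊗[R p] Y p →ₗ[R p] (ℕ × ℕ →₀ ZMod p) :=
  Finsupp.mapRange.linearMap (LinearMap.mul' (R p) (ZMod p)) ∘ₗ
    (finsuppTensorFinsupp (R p) (R p) (ZMod p) (ZMod p) ℕ ℕ).toLinearMap ∘ₗ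
      TensorProduct.map (coord p) (coord p)

lemma coordTensor_bY (p : ℕ) [Fact p.Prime] (i j : ℕ) :
    coordTensor p (bY p i ⊗ₜ[R p] bY p j) = Finsupp.single (i, j) 1 := by
  simp [coordTensor, coord_bY]

/-- The additive map `⊕_{ℕ × ℕ} ℤ/p → Y ⊗ Y` sending the `(i, j)`-th generator to `b_i ⊗ b_j`. -/
def fromSum (p : ℕ) [Fact p.Prime] : (⨁ _ : ℕ × ℕ, ZMod p) →+ (Y p ⊗[R p] Y p) :=
  DirectSum.toAddMonoid fun ij =>
    ZMod.lift p ⟨zmultiplesHom _ (bY p ij.1 ⊗ₜ[R p] bY p ij.2), by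
      have h := (bY_tmul_bY_killed p ij.1 ij.2).1
      rw [Nat.cast_smul_eq_nsmul] at h
      simpa using h⟩

lemma fromSum_of (p : ℕ) [Fact p.Prime] (ij : ℕ × ℕ) :
    fromSum p (DirectSum.of (fun _ : ℕ × ℕ => ZMod p) ij 1) =
      bY p ij.1 ⊗ₜ[R p] bY p ij.2 := by
  rw [fromSum, DirectSum.toAddMonoid_of, ← Int.cast_one, ZMod.lift_coe]
  simp

lemma fromSum_injective (p : ℕ) [Fact p.Prime] : Function.Injective (fromSum p) := by
  let back : (ℕ × ℕ →₀ ZMod p) →+ (⨁ _ : ℕ × ℕ, ZMod p) :=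
    Finsupp.liftAddHom fun ij => DirectSum.of (fun _ : ℕ × ℕ => ZMod p) ij
  have h : (back.comp (coordTensor p).toAddMonoidHom).comp (fromSum p) = AddMonoidHom.id _ := by
    refine DirectSum.addHom_ext fun ij y => ?_
    -- additive maps out of `ℤ/p` are determined by their value at `1`
    obtain ⟨n, rfl⟩ := ZMod.natCast_zmod_surjective y
    rw [← nsmul_one, map_nsmul, map_nsmul, map_nsmul]
    congr 1
    change back (coordTensor p (fromSum p _)) = _
    rw [fromSum_of, coordTensor_bY]
    simp [back]
  exact Function.LeftInverse.injective (g := back.comp (coordTensor p).toAddMonoidHom)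
    fun x => DFunLike.congr_fun h x

lemma fromSum_surjective (p : ℕ) [Fact p.Prime] : Function.Surjective (fromSum p) := by
  rw [← AddMonoidHom.mrange_eq_top, eq_top_iff]
  rintro t -
  induction t with
  | zero => exact zero_mem _
  | add a b ha hb => exact add_mem ha hb
  | tmul x y =>
    obtain ⟨x, rfl⟩ := Submodule.Quotient.mk_surjective _ x
    obtain ⟨y, rfl⟩ := Submodule.Quotient.mk_surjective _ y
    have hmk : ∀ (i : ℕ) (r : R p), (Submodule.Quotient.mk (Finsupp.single i r) : Y p) =
        r • bY p i := fun i r => by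
      rw [bY, ← Submodule.Quotient.mk_smul, Finsupp.smul_single_one]
    induction x using Finsupp.induction_linear with
    | zero => rw [Submodule.Quotient.mk_zero, TensorProduct.zero_tmul]; exact zero_mem _
    | add a b ha hb =>
      rw [Submodule.Quotient.mk_add, TensorProduct.add_tmul]; exact add_mem ha hb
    | single i r =>
      induction y using Finsupp.induction_linear with
      | zero => rw [Submodule.Quotient.mk_zero, TensorProduct.tmul_zero]; exact zero_mem _
      | add a b ha hb =>
        rw [Submodule.Quotient.mk_add, TensorProduct.tmul_add]; exact add_mem ha hb
      | single j s =>
        rw [hmk, hmk, TensorProduct.smul_tmul_smul, smul_bY_tmul_bY]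
        exact nsmul_mem (AddMonoidHom.mem_mrange.2 ⟨_, fromSum_of p (i, j)⟩) _

/-- the additive map `⊕_{(i,j) ∈ ℕ×ℕ} ℤ/p → Y ⊗_R Y` sending the generator
of the `(i,j)`-th summand to `b_i ⊗ b_j` is an isomorphism of abelian groups. -/
theorem stmt_6 (p : ℕ) [Fact p.Prime] :
    ∃ e : (⨁ _ : ℕ × ℕ, ZMod p) ≃+ (Y p ⊗[R p] Y p),
      ∀ ij : ℕ × ℕ,
        e (DirectSum.of (fun _ : ℕ × ℕ => ZMod p) ij 1) = bY p ij.1 ⊗ₜ[R p] bY p ij.2 := by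
  exact ⟨AddEquiv.ofBijective (fromSum p)
    ⟨fromSum_injective p, fromSum_surjective p⟩, fromSum_of p⟩
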